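/- Let H be a Hopf algebra over K and let (M, μ) be a left H-Hopf module algebra. Then the K-linear map P_L : M → M defined by P_L(m) = ∑ S(m₍₋₁₎) · m₍₀₎ is a Rota-Baxter operator of weight -1 on M, i.e. P_L(m)P_L(m') = P_L(m P_L(m')) + P_L(P_L(m) m') − P_L(mm') for all m, m' ∈ M. -/

import Mathlib

/-!
STATEMENT 2: If `(M, μ)` is a left `H`-Hopf module algebra over a Hopf algebra `H`,
then `P_L(m) = ∑ S(m₍₋₁₎) · m₍₀₎` is a Rota-Baxter operator of weight `-1` on `M`.
-/

open TensorProduct Coalgebra HopfAlgebra LinearMap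

/-!
Linear maps `H → End N` form an algebra under convolution, which acts on the linear maps `M → N`
out of an `H`-comodule by `(φ ⋆ f) m = ∑ φ(m₍₋₁₎) (f m₍₀₎)`. In these terms `P_L = S ⋆ id`.

Let `H ⊗ H` act on `H ⊗ M` by `(a ⊗ b)(c ⊗ m) = ac ⊗ b · m`, and let `j m = 1 ⊗ m`. As
`Δ h = (h ⊗ 1)(1 ⊗ h)` in the convolution sense and `S` is inverse to `id`, one finds
`δ = Δ ⋆ (j ∘ P_L)`, while the Hopf module axiom says `δ ∘ P_L = (Δ ∘ S) ⋆ δ`. Since `Δ ∘ S` is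
inverse to `Δ`, it follows that `δ ∘ P_L = j ∘ P_L`: the values of `P_L` are coinvariant. Hence
`P_L(m P_L(m')) = P_L(m) P_L(m')`. On the other hand `P_L(h · m) = ε(h) P_L(m)`, so
`P_L(P_L(m) m') = ∑ P_L(S(m₍₋₁₎) · (m₍₀₎ m')) = P_L(m m')`, and the last two terms of the
Rota-Baxter identity cancel.
-/

open WithConv (toConv)

section Convolution

variable {R C M N : Type*} [CommSemiring R] [AddCommMonoid C] [Module R C]
  [AddCommMonoid M] [Module R M] [AddCommMonoid N] [Module R N]

/-- The axioms of a left comodule over the coalgebra `C`, for a coaction `δ`. -/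
structure IsLeftComodule [Coalgebra R C] (δ : M →ₗ[R] C ⊗[R] M) : Prop where
  coassoc (m : M) :
    δ.lTensor C (δ m) = TensorProduct.assoc R C C M ((comul (R := R)).rTensor M (δ m))
  counital (m : M) : TensorProduct.lid R M ((counit (R := R)).rTensor M (δ m)) = m

/-- The convolution action `(φ ⋆ f) m = ∑ φ(m₍₋₁₎) (f m₍₀₎)` of linear maps `φ : C → End N` on
linear maps `f : M → N`, where `δ` is a coaction of `C` on `M`. -/
def convSMul (δ : M →ₗ[R] C ⊗[R] M) (φ : WithConv (C →ₗ[R] Module.End R N)) (f : M →ₗ[R] N) :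
    M →ₗ[R] N :=
  TensorProduct.lift φ.ofConv ∘ₗ f.lTensor C ∘ₗ δ

namespace IsLeftComodule

variable [Coalgebra R C] {δ : M →ₗ[R] C ⊗[R] M}

theorem one_convSMul (hδ : IsLeftComodule δ) (f : M →ₗ[R] N) : convSMul δ 1 f = f := by
  have eq_counit : TensorProduct.lift (1 : WithConv (C →ₗ[R] Module.End R N)).ofConv ∘ₗ
      f.lTensor C = f ∘ₗ TensorProduct.lid R M ∘ₗ counit.rTensor M := by
    ext c m
    simp [LinearMap.convOne_def, Module.algebraMap_end_apply]
  ext m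
  simpa [convSMul, hδ.counital] using LinearMap.congr_fun eq_counit (δ m)

theorem mul_convSMul (hδ : IsLeftComodule δ) (φ ψ : WithConv (C →ₗ[R] Module.End R N))
    (f : M →ₗ[R] N) : convSMul δ (φ * ψ) f = convSMul δ φ (convSMul δ ψ f) := by
  have eq_assoc : TensorProduct.lift (φ * ψ).ofConv ∘ₗ f.lTensor C =
      TensorProduct.lift φ.ofConv ∘ₗ (TensorProduct.lift ψ.ofConv ∘ₗ f.lTensor C).lTensor C ∘ₗ
        TensorProduct.assoc R C C M ∘ₗ comul.rTensor M := by
    ext c m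
    simp [LinearMap.convMul_def, ← (ℛ R c).eq, TensorProduct.sum_tmul]
  ext m
  have := LinearMap.congr_fun eq_assoc (δ m)
  simp only [LinearMap.comp_apply, LinearEquiv.coe_coe, ← hδ.coassoc] at this
  simpa [convSMul, ← LinearMap.lTensor_comp_apply, LinearMap.comp_assoc] using this

end IsLeftComodule

end Convolution

section AlgHom

variable {R H A : Type*} [CommSemiring R] [Semiring H] [Semiring A] [Algebra R A]

theorem algHom_comp_antipode_convMul_algHom [HopfAlgebra R H] (φ : H →ₐ[R] A) :
    toConv (φ.toLinearMap ∘ₗ antipode R) * toConv φ.toLinearMap = 1 := by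
  have := algHom_comp_convMul_distrib φ (toConv (antipode R)) (toConv id)
  rw [antipode_mul_id] at this
  ext h
  simpa [LinearMap.convOne_def] using (LinearMap.congr_fun this h).symm

theorem algHom_convMul_algHom_comp_antipode [HopfAlgebra R H] (φ : H →ₐ[R] A) :
    toConv φ.toLinearMap * toConv (φ.toLinearMap ∘ₗ antipode R) = 1 := by
  have := algHom_comp_convMul_distrib φ (toConv id) (toConv (antipode R))
  rw [id_mul_antipode] at this
  ext h
  simpa [LinearMap.convOne_def] using (LinearMap.congr_fun this h).symm

theorem comp_includeLeft_convMul_comp_includeRight [Bialgebra R H] (φ : H ⊗[R] H →ₐ[R] A) :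
    toConv (φ.comp Algebra.TensorProduct.includeLeft).toLinearMap *
        toConv (φ.comp Algebra.TensorProduct.includeRight).toLinearMap =
      toConv (φ.comp (Bialgebra.comulAlgHom R H)).toLinearMap := by
  ext h
  rw [(ℛ R h).convMul_apply]
  simp [← map_mul, ← map_sum, (ℛ R h).eq]

end AlgHom

section Action

variable {R A B M : Type*} [CommSemiring R] [Semiring A] [Algebra R A] [Semiring B] [Algebra R B]
  [AddCommMonoid M] [Module R M]

/-- The axioms of a left module over the algebra `A`, for an action given as a linear map on the
tensor product. -/
structure IsLeftAction (act : A ⊗[R] M →ₗ[R] M) : Prop where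
  one_act (m : M) : act (1 ⊗ₜ m) = m
  act_act (a b : A) (m : M) : act (a ⊗ₜ act (b ⊗ₜ m)) = act ((a * b) ⊗ₜ m)

/-- The representation of `A` on `M` corresponding to a left action. -/
def IsLeftAction.toEnd {act : A ⊗[R] M →ₗ[R] M} (hact : IsLeftAction act) :
    A →ₐ[R] Module.End R M :=
  AlgHom.ofLinearMap (TensorProduct.curry act) (LinearMap.ext hact.one_act)
    fun a b => LinearMap.ext fun m => (hact.act_act a b m).symm

@[simp]
theorem IsLeftAction.toEnd_apply {act : A ⊗[R] M →ₗ[R] M} (hact : IsLeftAction act) (a : A)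
    (m : M) : hact.toEnd a m = act (a ⊗ₜ m) :=
  rfl

/-- The representation `(a ⊗ b)(c ⊗ m) = ac ⊗ ρ(b) m` of `A ⊗ B` on `A ⊗ M`, the tensor product of
the left regular representation of `A` with a representation `ρ` of `B`. -/
def regularTensor (ρ : B →ₐ[R] Module.End R M) : A ⊗[R] B →ₐ[R] Module.End R (A ⊗[R] M) :=
  Module.endTensorEndAlgHom.comp (Algebra.TensorProduct.map (Algebra.lmul R A) ρ)

@[simp]
theorem regularTensor_tmul_tmul (ρ : B →ₐ[R] Module.End R M) (a c : A) (b : B) (m : M) :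
    regularTensor ρ (a ⊗ₜ b) (c ⊗ₜ m) = (a * c) ⊗ₜ ρ b m := by
  simp [regularTensor, Module.endTensorEndAlgHom_apply]

theorem IsLeftAction.regularTensor_toEnd_apply {act : B ⊗[R] M →ₗ[R] M} (hact : IsLeftAction act)
    (x : A ⊗[R] B) (t : A ⊗[R] M) :
    regularTensor hact.toEnd x t =
      TensorProduct.map (mul' R A) act
        (TensorProduct.tensorTensorTensorComm R A B A M (x ⊗ₜ t)) := by
  induction x with
  | zero => simp
  | add x y hx hy => simp [add_tmul, hx, hy]
  | tmul a b =>
    induction t with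
    | zero => simp
    | add s t hs ht => simp [tmul_add, hs, ht]
    | tmul c m => simp

end Action

section HopfModule

variable {R H M : Type*} [CommSemiring R] [Semiring H] [Bialgebra R H]

/-- The axioms of a left Hopf module over `H`, for an action `act` and a coaction `δ`. -/
structure IsLeftHopfModule [AddCommMonoid M] [Module R M] (act : H ⊗[R] M →ₗ[R] M)
    (δ : M →ₗ[R] H ⊗[R] M) : Prop extends IsLeftAction act, IsLeftComodule δ where
  coact_act (h : H) (m : M) :
    δ (act (h ⊗ₜ m)) =
      TensorProduct.map (mul' R H) act
        (TensorProduct.tensorTensorTensorComm R H H H M (comul h ⊗ₜ δ m))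

theorem IsLeftHopfModule.coact_act_eq_regularTensor [AddCommMonoid M] [Module R M]
    {act : H ⊗[R] M →ₗ[R] M} {δ : M →ₗ[R] H ⊗[R] M} (hM : IsLeftHopfModule act δ)
    (h : H) (m : M) :
    δ (act (h ⊗ₜ m)) = regularTensor hM.toEnd (comul (R := R) h) (δ m) := by
  rw [hM.coact_act, hM.regularTensor_toEnd_apply]

/-- The axioms of a left Hopf module algebra over `H`. The multiplication of `M` is not required to
be associative. -/
structure IsLeftHopfModuleAlgebra [NonUnitalNonAssocSemiring M] [Module R M] [SMulCommClass R M M]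
    [IsScalarTower R M M] (act : H ⊗[R] M →ₗ[R] M) (δ : M →ₗ[R] H ⊗[R] M) : Prop
    extends IsLeftHopfModule act δ where
  act_mul (h : H) (m m' : M) : act (h ⊗ₜ (m * m')) = act (h ⊗ₜ m) * m'
  coact_mul (m m' : M) :
    δ (m * m') =
      TensorProduct.map (mul' R H) (mul' R M)
        (TensorProduct.tensorTensorTensorComm R H M H M (δ m ⊗ₜ δ m'))

end HopfModule

section CoinvariantProj

variable {R H M N : Type*} [CommSemiring R] [Semiring H] [HopfAlgebra R H]
  [AddCommMonoid M] [Module R M] [AddCommMonoid N] [Module R N]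
  {act : H ⊗[R] M →ₗ[R] M} {δ : M →ₗ[R] H ⊗[R] M}

/-- The operator `P_L(m) = ∑ S(m₍₋₁₎) · m₍₀₎`, which projects a Hopf module onto its
coinvariants. -/
def coinvariantProj (act : H ⊗[R] M →ₗ[R] M) (δ : M →ₗ[R] H ⊗[R] M) : M →ₗ[R] M :=
  act ∘ₗ (antipode R).rTensor M ∘ₗ δ

theorem IsLeftComodule.comp_coinvariantProj_eq_self (hδ : IsLeftComodule δ) (f : M →ₗ[R] N)
    (hf : ∀ (h : H) (m : M), f (act (h ⊗ₜ m)) = counit (R := R) h • f m) :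
    f ∘ₗ coinvariantProj act δ = f := by
  have eq_counit : f ∘ₗ act ∘ₗ (antipode R).rTensor M =
      f ∘ₗ TensorProduct.lid R M ∘ₗ counit.rTensor M := by
    ext h m
    simp [hf]
  ext m
  simpa [coinvariantProj, hδ.counital] using LinearMap.congr_fun eq_counit (δ m)

theorem IsLeftAction.sum_antipode_act_act (hact : IsLeftAction act) {ι : Type*} {h : H}
    (repr : Repr R h ι) (m : M) :
    ∑ i ∈ repr.index, act (antipode R (repr.left i) ⊗ₜ act (repr.right i ⊗ₜ m)) =
      counit (R := R) h • m := by
  simp only [hact.act_act, ← map_sum, ← TensorProduct.sum_tmul, sum_antipode_mul_eq_smul,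
    ← TensorProduct.smul_tmul', map_smul, hact.one_act]

namespace IsLeftHopfModule

theorem comul_convSMul_mk_one_comp_coinvariantProj (hM : IsLeftHopfModule act δ) :
    convSMul δ (toConv ((regularTensor hM.toEnd).comp (Bialgebra.comulAlgHom R H)).toLinearMap)
        (TensorProduct.mk R H M 1 ∘ₗ coinvariantProj act δ) = δ := by
  let σ : H ⊗[R] H →ₐ[R] Module.End R (H ⊗[R] M) := regularTensor hM.toEnd
  let σ₁ := σ.comp Algebra.TensorProduct.includeLeft
  let σ₂ := σ.comp Algebra.TensorProduct.includeRight
  let j := TensorProduct.mk R H M 1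
  have antipode_convSMul :
      convSMul δ (toConv (σ₂.toLinearMap ∘ₗ antipode R)) j =
        j ∘ₗ coinvariantProj act δ := by
    have : TensorProduct.lift (σ₂.toLinearMap ∘ₗ antipode R) ∘ₗ j.lTensor H =
        j ∘ₗ act ∘ₗ (antipode R).rTensor M := by
      ext h m
      simp [σ, σ₂, j]
    exact congr($this ∘ₗ δ)
  have left_convSMul : convSMul δ (toConv σ₁.toLinearMap) j = δ := by
    have : TensorProduct.lift σ₁.toLinearMap ∘ₗ j.lTensor H = LinearMap.id := by
      ext h m
      simp [σ, σ₁, j]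
    exact congr($this ∘ₗ δ)
  rw [← comp_includeLeft_convMul_comp_includeRight, hM.mul_convSMul, ← antipode_convSMul,
    ← hM.mul_convSMul _ _ j, algHom_convMul_algHom_comp_antipode, hM.one_convSMul, left_convSMul]

theorem coact_comp_coinvariantProj (hM : IsLeftHopfModule act δ) :
    δ ∘ₗ coinvariantProj act δ = TensorProduct.mk R H M 1 ∘ₗ coinvariantProj act δ := by
  let σΔ := (regularTensor hM.toEnd).comp (Bialgebra.comulAlgHom R H)
  calc
    δ ∘ₗ coinvariantProj act δ
      = convSMul δ (toConv (σΔ.toLinearMap ∘ₗ antipode R)) δ := by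
        have : δ ∘ₗ act ∘ₗ (antipode R).rTensor M =
            TensorProduct.lift (σΔ.toLinearMap ∘ₗ antipode R) ∘ₗ δ.lTensor H := by
          ext h m
          simp [σΔ, hM.coact_act_eq_regularTensor]
        exact congr($this ∘ₗ δ)
    _ = convSMul δ (toConv (σΔ.toLinearMap ∘ₗ antipode R))
          (convSMul δ (toConv σΔ.toLinearMap)
            (TensorProduct.mk R H M 1 ∘ₗ coinvariantProj act δ)) := by
        rw [hM.comul_convSMul_mk_one_comp_coinvariantProj]
    _ = TensorProduct.mk R H M 1 ∘ₗ coinvariantProj act δ := by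
        rw [← hM.mul_convSMul, algHom_comp_antipode_convMul_algHom, hM.one_convSMul]

theorem coinvariantProj_act (hM : IsLeftHopfModule act δ) (h : H) (m : M) :
    coinvariantProj act δ (act (h ⊗ₜ m)) = counit (R := R) h • coinvariantProj act δ m := by
  have comp_regularTensor :
      act ∘ₗ (antipode R).rTensor M ∘ₗ regularTensor hM.toEnd (comul (R := R) h) =
        counit (R := R) h • (act ∘ₗ (antipode R).rTensor M) := by
    refine TensorProduct.ext' fun c n => ?_
    calc
      act ((antipode R).rTensor M (regularTensor hM.toEnd (comul (R := R) h) (c ⊗ₜ n)))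
        = ∑ i ∈ (ℛ R h).index, act (antipode R c ⊗ₜ
            act (antipode R ((ℛ R h).left i) ⊗ₜ act ((ℛ R h).right i ⊗ₜ n))) := by
          rw [← (ℛ R h).eq]
          simp [antipode_mul_antidistrib, ← hM.act_act]
      _ = counit (R := R) h • act (antipode R c ⊗ₜ n) := by
          simp only [← map_sum, ← TensorProduct.tmul_sum, hM.sum_antipode_act_act,
            TensorProduct.tmul_smul, map_smul]
  simpa [coinvariantProj, hM.coact_act_eq_regularTensor] using
    LinearMap.congr_fun comp_regularTensor (δ m)

end IsLeftHopfModule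

end CoinvariantProj

section HopfModuleAlgebra

variable {R H M : Type*} [CommSemiring R] [Semiring H] [HopfAlgebra R H]
  [NonUnitalNonAssocSemiring M] [Module R M] [SMulCommClass R M M] [IsScalarTower R M M]
  {act : H ⊗[R] M →ₗ[R] M} {δ : M →ₗ[R] H ⊗[R] M}

namespace IsLeftHopfModuleAlgebra

theorem coinvariantProj_mul_of_coact_eq (hM : IsLeftHopfModuleAlgebra act δ) (m : M) {n : M}
    (hn : δ n = 1 ⊗ₜ n) : coinvariantProj act δ (m * n) = coinvariantProj act δ m * n := by
  have eq_mulRight : act ∘ₗ (antipode R).rTensor M ∘ₗ TensorProduct.map (mul' R H) (mul' R M) ∘ₗ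
      (TensorProduct.tensorTensorTensorComm R H M H M).toLinearMap ∘ₗ
        (TensorProduct.mk R (H ⊗[R] M) (H ⊗[R] M)).flip (1 ⊗ₜ n) =
      mulRight R n ∘ₗ act ∘ₗ (antipode R).rTensor M := by
    ext h m
    simp [hM.act_mul]
  simpa [coinvariantProj, hM.coact_mul, hn] using LinearMap.congr_fun eq_mulRight (δ m)

theorem coinvariantProj_mul_coinvariantProj (hM : IsLeftHopfModuleAlgebra act δ) (m m' : M) :
    coinvariantProj act δ (m * coinvariantProj act δ m') =
      coinvariantProj act δ m * coinvariantProj act δ m' :=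
  hM.coinvariantProj_mul_of_coact_eq m (LinearMap.congr_fun hM.coact_comp_coinvariantProj m')

theorem coinvariantProj_coinvariantProj_mul (hM : IsLeftHopfModuleAlgebra act δ) (m m' : M) :
    coinvariantProj act δ (coinvariantProj act δ m * m') = coinvariantProj act δ (m * m') :=
  LinearMap.congr_fun (hM.comp_coinvariantProj_eq_self (coinvariantProj act δ ∘ₗ mulRight R m')
    fun h n => by simp [← hM.act_mul, hM.coinvariantProj_act]) m

end IsLeftHopfModuleAlgebra

end HopfModuleAlgebra

theorem leftHopfModuleAlgebra_PL_isRotaBaxter_weight_neg_one_general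
    {K H M : Type*} [CommRing K] [Semiring H] [HopfAlgebra K H]
    [NonUnitalNonAssocRing M] [Module K M] [SMulCommClass K M M] [IsScalarTower K M M]
    {act : H ⊗[K] M →ₗ[K] M} {δ : M →ₗ[K] H ⊗[K] M} (hM : IsLeftHopfModuleAlgebra act δ)
    (m m' : M) :
    coinvariantProj act δ m * coinvariantProj act δ m' =
      coinvariantProj act δ (m * coinvariantProj act δ m') +
        coinvariantProj act δ (coinvariantProj act δ m * m') +
          (-1 : K) • coinvariantProj act δ (m * m') := by
  rw [hM.coinvariantProj_mul_coinvariantProj, hM.coinvariantProj_coinvariantProj_mul, neg_one_smul,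
    add_neg_cancel_right]

theorem leftHopfModuleAlgebra_PL_isRotaBaxter_weight_neg_one
    (K : Type*) [Field K] [CharZero K]
    (H : Type*) [Ring H] [HopfAlgebra K H]
    (M : Type*) [NonUnitalRing M] [Module K M]
    [SMulCommClass K M M] [IsScalarTower K M M]
    -- left H-module structure on M
    (act : H ⊗[K] M →ₗ[K] M)
    (act_one : ∀ m : M, act ((1 : H) ⊗ₜ[K] m) = m)
    (act_mul : ∀ (h h' : H) (m : M),
      act (h ⊗ₜ[K] act (h' ⊗ₜ[K] m)) = act ((h * h') ⊗ₜ[K] m))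
    -- left H-comodule structure on M
    (δ : M →ₗ[K] H ⊗[K] M)
    (coassoc : ∀ m : M,
      (δ.lTensor H) (δ m) =
        (TensorProduct.assoc K H H M)
          (((Coalgebra.comul (R := K) (A := H)).rTensor M) (δ m)))
    (counital : ∀ m : M,
      (TensorProduct.lid K M) (((Coalgebra.counit (R := K) (A := H)).rTensor M) (δ m)) = m)
    -- Hopf module compatibility: δ(h · m) = Δ(h)δ(m)
    (hopf_compat : ∀ (h : H) (m : M),
      δ (act (h ⊗ₜ[K] m)) =
        (TensorProduct.map (LinearMap.mul' K H) act)
          ((TensorProduct.tensorTensorTensorComm K H H H M)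
            (Coalgebra.comul h ⊗ₜ[K] δ m)))
    -- h · (mm') = (h · m) m'
    (act_mul_compat : ∀ (h : H) (m m' : M),
      act (h ⊗ₜ[K] (m * m')) = act (h ⊗ₜ[K] m) * m')
    -- δ(mm') = ∑ m₍₋₁₎m'₍₋₁₎ ⊗ m₍₀₎m'₍₀₎
    (δ_mul : ∀ m m' : M,
      δ (m * m') =
        (TensorProduct.map (LinearMap.mul' K H) (LinearMap.mul' K M))
          ((TensorProduct.tensorTensorTensorComm K H M H M) (δ m ⊗ₜ[K] δ m'))) :
    -- P_L(m) = ∑ S(m₍₋₁₎) · m₍₀₎ is a Rota-Baxter operator of weight -1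
    let PL : M →ₗ[K] M := act ∘ₗ ((antipode (R := K) (A := H)).rTensor M) ∘ₗ δ
    ∀ m m' : M,
      PL m * PL m' =
        PL (m * PL m') + PL (PL m * m') + (-1 : K) • PL (m * m') :=
  leftHopfModuleAlgebra_PL_isRotaBaxter_weight_neg_one_general
    ⟨⟨⟨act_one, act_mul⟩, ⟨coassoc, counital⟩, hopf_compat⟩, act_mul_compat, δ_mul⟩
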